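/- arXiv:1103.1174 — 2 statements merged into one kernel-verified Lean document; each statement's English description precedes it below -/
import Mathlib

section
/- Let k be a field, A = k[X₀', X₁', X₀, …, Xₙ], and let D : A → A be a derivation (an additive map satisfying the Leibniz rule D(ab) = a·D(b) + D(a)·b). Then for every ideal I of A, the inclusion D(I) ⊆ eq(I) implies D(eq(I)) ⊆ eq(I); in particular D is correct with respect to every ideal 𝔭 of A. -/
open scoped Classical

noncomputable section

/-- The height (rank) of an ideal: the minimum of the heights of the primes containing it. -/
noncomputable def idealHeight {R : Type*} [CommRing R] (I : Ideal R) : ℕ∞ :=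
  ⨅ (p : PrimeSpectrum R) (_ : I ≤ p.asIdeal), Order.height p

/-- The contraction `I·A_𝔭 ∩ A` of an ideal `I` through the localization at a prime `𝔭`. -/
noncomputable def locContract {R : Type*} [CommRing R] (p : Ideal R) [p.IsPrime]
    (I : Ideal R) : Ideal R :=
  (I.map (algebraMap R (Localization.AtPrime p))).comap (algebraMap R (Localization.AtPrime p))

/-- `eq(I)`: the equidimensional part of minimal rank of `I`, i.e. the intersection of the
contractions `I·A_𝔮 ∩ A` over the minimal primes `𝔮` of `I` of minimal height. -/
noncomputable def eqPart {R : Type*} [CommRing R] (I : Ideal R) : Ideal R :=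
  ⨅ (p : PrimeSpectrum R) (_ : p.asIdeal ∈ I.minimalPrimes)
    (_ : idealHeight p.asIdeal = idealHeight I), locContract p.asIdeal I

/-- An ideal is equidimensional if all associated primes of `R ⧸ J` have height `height J`. -/
def IsEquidimensional {R : Type*} [CommRing R] (J : Ideal R) : Prop :=
  ∀ q ∈ associatedPrimes R (R ⧸ J), idealHeight q = idealHeight J

/-- The length of a module, as the longest chain of submodules. -/
noncomputable def moduleLength (R M : Type*) [Ring R] [AddCommGroup M] [Module R M] : ℕ∞ :=
  Order.height (⊤ : Submodule R M)

/-- `m(I)`: the number of primary components of minimal height of `I`, counted with their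
length as multiplicity: the sum over primes `𝔮` with `height 𝔮 = height I` of the length of
the `A_𝔮`-module `(A/I)_𝔮`. -/
noncomputable def mIdeal {R : Type*} [CommRing R] (I : Ideal R) : ℕ∞ :=
  ∑' p : PrimeSpectrum R,
    if idealHeight p.asIdeal = idealHeight I then
      moduleLength (Localization.AtPrime p.asIdeal)
        (LocalizedModule p.asIdeal.primeCompl (R ⧸ I))
    else 0

/-!
The contractions `I·A_𝔮 ∩ A` defining `eq(I)` can be treated one at a time. If `x` lies in such a
contraction, then `s * x ∈ I` for some `s ∉ 𝔮`, and the Leibniz rule puts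
`s * D x = D (s * x) - D s * x` in the contraction, where the factor `s` can be cancelled.
-/

section LeibnizRule

variable {R : Type*} [CommRing R] {p I : Ideal R} [p.IsPrime] {x : R}

theorem mem_locContract_iff : x ∈ locContract p I ↔ ∃ s ∉ p, s * x ∈ I :=
  IsLocalization.algebraMap_mem_map_algebraMap_iff p.primeCompl _ I x

theorem mul_mem_locContract_iff {s : R} (hs : s ∉ p) :
    s * x ∈ locContract p I ↔ x ∈ locContract p I := by
  have hunit : IsUnit (algebraMap R (Localization.AtPrime p) s) :=
    IsLocalization.map_units (Localization.AtPrime p) (⟨s, hs⟩ : p.primeCompl)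
  rw [locContract, Ideal.mem_comap, Ideal.mem_comap, map_mul, Ideal.unit_mul_mem_iff_mem _ hunit]

theorem mem_eqPart_iff :
    x ∈ eqPart I ↔ ∀ p : PrimeSpectrum R, p.asIdeal ∈ I.minimalPrimes →
      idealHeight p.asIdeal = idealHeight I → x ∈ locContract p.asIdeal I := by
  simp only [eqPart, Ideal.mem_iInf]

theorem map_mem_locContract_of_leibniz {D : R → R}
    (hleib : ∀ a b, D (a * b) = a * D b + D a * b)
    (hI : ∀ a ∈ I, D a ∈ locContract p I) (hx : x ∈ locContract p I) :
    D x ∈ locContract p I := by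
  obtain ⟨s, hs, hsx⟩ := mem_locContract_iff.mp hx
  have hsum : s * D x + D s * x ∈ locContract p I := hleib s x ▸ hI (s * x) hsx
  have hsDx : s * D x ∈ locContract p I :=
    (Ideal.add_mem_iff_left _ (Ideal.mul_mem_left _ (D s) hx)).mp hsum
  exact (mul_mem_locContract_iff hs).mp hsDx

theorem derivation_is_correct_general {D : R → R}
    (hleib : ∀ a b, D (a * b) = a * D b + D a * b)
    (hI : ∀ a ∈ I, D a ∈ eqPart I) (hx : x ∈ eqPart I) : D x ∈ eqPart I := by
  rw [mem_eqPart_iff] at hx ⊢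
  intro p hp hheight
  exact map_mem_locContract_of_leibniz hleib
    (fun a ha => mem_eqPart_iff.mp (hI a ha) p hp hheight) (hx p hp hheight)

end LeibnizRule

/-- A derivation of the polynomial ring is correct with respect to every ideal
(Corollary `exemple_OpDiff_Correcte` of the paper): for every ideal `I`,
`D(I) ⊆ eq(I)` implies `D(eq(I)) ⊆ eq(I)`. -/
theorem derivation_is_correct
    {k : Type*} [Field k] (n : ℕ)
    (D : MvPolynomial (Fin 2 ⊕ Fin (n + 1)) k → MvPolynomial (Fin 2 ⊕ Fin (n + 1)) k)
    (hadd : ∀ a b, D (a + b) = D a + D b)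
    (hleib : ∀ a b, D (a * b) = a * D b + D a * b) :
    ∀ I : Ideal (MvPolynomial (Fin 2 ⊕ Fin (n + 1)) k),
      (∀ a ∈ I, D a ∈ eqPart I) → ∀ a ∈ eqPart I, D a ∈ eqPart I :=
  fun _ hI _ hx => derivation_is_correct_general hleib hI hx
end
end

section
/- Let k be a field, A = k[X₀', X₁', X₀, …, Xₙ], let φ : A → A be a ring homomorphism, and let 𝔭 be a prime ideal of A such that height φ⁻¹(𝔮) = height 𝔮 for every prime ideal 𝔮 ⊆ 𝔭. Then φ is correct with respect to 𝔭: for every ideal I of A all of whose associated primes are contained in 𝔭, the inclusion φ(I) ⊆ eq(I) implies φ(eq(I)) ⊆ eq(I). -/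
/-!
Let `𝔮` be a minimal prime of `I` of minimal height. Since `φ(I) ⊆ eq(I) ⊆ 𝔮`, the prime
`φ⁻¹(𝔮)` contains `I`; having the height of `I`, it is again a minimal prime of `I` of minimal
height. So every `a ∈ eq(I)` is multiplied into `I` by some `s ∉ φ⁻¹(𝔮)`; then `φ s * φ a` lies in
`I·A_𝔮 ∩ A`, and so does `φ a` because `φ s ∉ 𝔮` is invertible in `A_𝔮`.
-/

open scoped Classical

noncomputable section

section

variable {R S : Type*} [CommRing R] [CommRing S]

lemma idealHeight_eq_height (I : Ideal R) : idealHeight I = I.height := by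
  apply le_antisymm
  · rw [Ideal.height_eq_inf_minimalPrimes]
    exact le_iInf₂ fun p hp =>
      iInf₂_le_of_le ⟨p, hp.isPrime⟩ hp.1.2 (PrimeSpectrum.height_eq_orderHeight _).ge
  · exact le_iInf₂ fun p hp => (Ideal.height_mono hp).trans_eq p.height_eq_orderHeight

lemma mem_minimalPrimes_of_idealHeight_eq {I p : Ideal R} [p.IsPrime] [p.FiniteHeight]
    (hIp : I ≤ p) (hp : idealHeight p = idealHeight I) : p ∈ I.minimalPrimes := by
  rw [idealHeight_eq_height, idealHeight_eq_height] at hp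
  exact Ideal.mem_minimalPrimes_of_height_le hIp hp.le

lemma minimalPrimes_subset_associatedPrimes_quotient [IsNoetherianRing R] (I : Ideal R) :
    I.minimalPrimes ⊆ associatedPrimes R (R ⧸ I) := by
  simpa only [Ideal.annihilator_quotient] using
    Module.associatedPrimes.minimalPrimes_annihilator_subset_associatedPrimes R (R ⧸ I)

lemma mem_locContract {p : Ideal R} [p.IsPrime] {I : Ideal R} {a : R} :
    a ∈ locContract p I ↔ ∃ s ∉ p, s * a ∈ I :=
  IsLocalization.algebraMap_mem_map_algebraMap_iff p.primeCompl _ I a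

lemma locContract_le {I p : Ideal R} [hp : p.IsPrime] (hIp : I ≤ p) : locContract p I ≤ p := by
  intro a ha
  obtain ⟨s, hs, hsa⟩ := mem_locContract.1 ha
  exact (hp.mem_or_mem (hIp hsa)).resolve_left hs

lemma locContract_comap_le_comap_locContract (φ : R →+* S) {q : Ideal S} [q.IsPrime]
    {I : Ideal R} {J : Ideal S} (hIJ : I ≤ (locContract q J).comap φ) :
    locContract (q.comap φ) I ≤ (locContract q J).comap φ := by
  intro a ha
  obtain ⟨s, hs, hsa⟩ := mem_locContract.1 ha
  obtain ⟨t, ht, hta⟩ := mem_locContract.1 (hIJ hsa)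
  refine mem_locContract.2 ⟨t * φ s, q.primeCompl.mul_mem ht hs, ?_⟩
  rwa [mul_assoc, ← map_mul]

lemma eqPart_le_locContract {I p : Ideal R} [hp : p.IsPrime] (hpI : p ∈ I.minimalPrimes)
    (hheight : idealHeight p = idealHeight I) : eqPart I ≤ locContract p I :=
  iInf_le_of_le ⟨p, hp⟩ (iInf₂_le hpI hheight)

theorem ring_hom_is_correct_general [IsNoetherianRing R] (φ : R →+* S) {I : Ideal R} {J : Ideal S}
    (hht : ∀ q ∈ J.minimalPrimes, idealHeight q = idealHeight J →
      idealHeight (q.comap φ) = idealHeight I)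
    (hIJ : I ≤ (eqPart J).comap φ) : eqPart I ≤ (eqPart J).comap φ := by
  simp only [eqPart, Ideal.comap_iInf]
  refine le_iInf fun ⟨q, hqprime⟩ => le_iInf₂ fun hq hqJ => ?_
  have hIq : I ≤ (locContract q J).comap φ :=
    hIJ.trans (Ideal.comap_mono (eqPart_le_locContract hq hqJ))
  have hheight : idealHeight (q.comap φ) = idealHeight I := hht q hq hqJ
  have hmin : q.comap φ ∈ I.minimalPrimes :=
    mem_minimalPrimes_of_idealHeight_eq
      (hIq.trans (Ideal.comap_mono (locContract_le hq.1.2))) hheight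
  exact (eqPart_le_locContract hmin hheight).trans (locContract_comap_le_comap_locContract φ hIq)

end

/-- A ring endomorphism of the polynomial ring preserving heights of primes below `𝔭` is
correct with respect to `𝔭` (Corollary `exemple_ApBirr_Correcte` of the paper). -/
theorem ring_hom_is_correct
    {k : Type*} [Field k] (n : ℕ)
    (φ : MvPolynomial (Fin 2 ⊕ Fin (n + 1)) k →+* MvPolynomial (Fin 2 ⊕ Fin (n + 1)) k)
    (𝔭 : Ideal (MvPolynomial (Fin 2 ⊕ Fin (n + 1)) k)) (h𝔭 : 𝔭.IsPrime)
    (hht : ∀ q : Ideal (MvPolynomial (Fin 2 ⊕ Fin (n + 1)) k), q.IsPrime → q ≤ 𝔭 →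
      idealHeight (q.comap φ) = idealHeight q) :
    ∀ I : Ideal (MvPolynomial (Fin 2 ⊕ Fin (n + 1)) k),
      (∀ q ∈ associatedPrimes (MvPolynomial (Fin 2 ⊕ Fin (n + 1)) k)
        (MvPolynomial (Fin 2 ⊕ Fin (n + 1)) k ⧸ I), q ≤ 𝔭) →
      (∀ a ∈ I, φ a ∈ eqPart I) → ∀ a ∈ eqPart I, φ a ∈ eqPart I :=
  fun I hass => ring_hom_is_correct_general φ fun q hq hqI => (hht q hq.isPrime
    (hass q (minimalPrimes_subset_associatedPrimes_quotient I hq))).trans hqI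
end
end
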